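/- Let a ∈ ℝ, let I be an interval with least element a, nonempty interior, and I ⊂ [a,∞), let m ∈ ℕ*, let α = (α₁,…,α_m) ∈ (0,1]^m, let q_a ∈ ℝ^m, let A : I → ℝ^{m×m} and B : I → ℝ^m be locally essentially bounded, and let Z satisfy, for almost every s, t ∈ I with s < t and all i, j, the integral equation Z_{ij}(t,s) = ((t−s)^{α_i−1}/Γ(α_i))·δ_{ij} + (1/Γ(α_i)) ∫_s^t (t−τ)^{α_i−1} (A(τ) Z(τ,s))_{ij} dτ, together with the bound |Z_{ij}(t,s)| ≤ (t−s)^{α_i−1}·Θ^b on each [a,b] ⊂ I for some Θ^b ≥ 0. Then the function q defined for almost every t ∈ I by q(t) := Z(t,a)·q_a + ∫_a^t Z(t,s)·B(s) ds satisfies the Duhamel integral representation: for almost every t ∈ I and every i ∈ {1,…,m}, q_i(t) = ((t−a)^{α_i−1}/Γ(α_i))·(q_a)_i + (1/Γ(α_i)) ∫_a^t (t−τ)^{α_i−1} (A(τ)·q(τ) + B(τ))_i dτ; equivalently, q is the unique global solution of the non-homogeneous linear Riemann–Liouville Cauchy problem D^{α_i}_{a+}[q_i] = (A q + B)_i a.e.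 on I with I^{1−α_i}_{a+}[q_i](a) = (q_a)_i. -/

import Mathlib

open MeasureTheory Set

/-- Left Riemann–Liouville fractional integral of order `α` with base point `a`
(for `α = 0` it is the identity). -/
noncomputable def rlInt (a α : ℝ) (q : ℝ → ℝ) (t : ℝ) : ℝ :=
  if α = 0 then q t else (1 / Real.Gamma α) * ∫ τ in a..t, (t - τ) ^ (α - 1) * q τ

/-- `q` is locally integrable on the interval `I` with least element `a`. -/
def LocIntegrableOn (a : ℝ) (I : Set ℝ) (q : ℝ → ℝ) : Prop :=
  ∀ b ∈ I, MeasureTheory.IntegrableOn q (Set.Icc a b)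

/-- `q` is a global solution on `If` of the Riemann–Liouville Cauchy problem
`D^{α_i}_{a+}[q_i] = F_i(q(·),·)` a.e. on `If`, `I^{1-α_i}_{a+}[q_i](a) = (qa)_i`. -/
def IsRLSolution (a : ℝ) (If : Set ℝ) {m : ℕ} (α : Fin m → ℝ) (qa : Fin m → ℝ)
    (F : (Fin m → ℝ) → ℝ → Fin m → ℝ) (q : ℝ → Fin m → ℝ) : Prop :=
  (∀ i, LocIntegrableOn a If fun t => q t i) ∧
  ∀ i, ∃ h : ℝ → ℝ, LocIntegrableOn a If h ∧
    (∀ᵐ t ∂(MeasureTheory.volume.restrict If),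
      rlInt a (1 - α i) (fun τ => q τ i) t = qa i + ∫ τ in a..t, h τ) ∧
    (∀ᵐ t ∂(MeasureTheory.volume.restrict If), h t = F (q t) t i)

/-!
Extend `Z` by zero to `t ≤ s`. Then for each `s` the columns of `Z(·, s)` solve linear Volterra
equations on one fixed interval `(a, b]`, and so do the vectors `Z(·, s) B(s)`. Integrating these
equations over `s`, with Fubini allowed by the bound `(t - s) ^ (α i - 1) Θ`, gives the Volterra
equation for `q`. By the semigroup property `I ^ (1 - α) I ^ α = I ^ 1` and the injectivity of
`I ^ (1 - α)`, that equation is equivalent to the Cauchy problem. Uniqueness is a Gronwall argument: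
in `L¹` with weight `exp (-r t)` the operator `I ^ α` has norm at most `r ^ (-α)`, so for large `r`
the Volterra operator is a contraction.
-/

open Filter Topology Matrix

section MeasureTheory

variable {X Y : Type*} [MeasurableSpace X] [MeasurableSpace Y]

theorem ae_prod_of_ae_ae_swap {μ : Measure X} {ν : Measure Y} [SFinite μ] [SFinite ν]
    {p : X × Y → Prop} (hp : NullMeasurableSet {z | p z} (μ.prod ν))
    (h : ∀ᵐ y ∂ν, ∀ᵐ x ∂μ, p (x, y)) : ∀ᵐ z ∂μ.prod ν, p z := by
  obtain ⟨s, hs_sub, hs, hs_eq⟩ := hp.exists_measurable_subset_ae_eq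
  have hp_imp : ∀ᵐ z ∂μ.prod ν, p z → z ∈ s := hs_eq.symm.le
  have hp_imp_swap : ∀ᵐ y ∂ν, ∀ᵐ x ∂μ, p (x, y) → (x, y) ∈ s :=
    Measure.ae_ae_of_ae_prod
      (Measure.measurePreserving_swap.quasiMeasurePreserving.ae hp_imp)
  have hs_swap : ∀ᵐ y ∂ν, ∀ᵐ x ∂μ, (x, y) ∈ s := by
    filter_upwards [h, hp_imp_swap] with y hy hy_imp
    filter_upwards [hy, hy_imp] with x hx hx_imp using hx_imp hx
  have hs_prod : ∀ᵐ z ∂μ.prod ν, z ∈ s :=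
    (Measure.ae_prod_mem_iff_ae_ae_mem hs).2
      ((Measure.ae_ae_comm (p := fun x y => (x, y) ∈ s) hs).2 hs_swap)
  exact hs_prod.mono fun z hz => hs_sub hz

theorem integrable_comp_sub_mul {ρ : Measure X} [SFinite ρ] {k : ℝ → ℝ} {φ U : X → ℝ}
    (hk : Integrable k) (hφ : Measurable φ) (hU : Integrable U ρ) :
    Integrable (fun z : ℝ × X => k (z.1 - φ z.2) * U z.2) (volume.prod ρ) := by
  have hmap : Measure.QuasiMeasurePreserving (Prod.map id φ) (volume.prod ρ)
      ((volume : Measure ℝ).prod (ρ.map φ)) :=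
    ⟨measurable_id.prodMap hφ, by
      rw [← Measure.map_prod_map _ _ measurable_id hφ, Measure.map_id]⟩
  have hsub : Measure.QuasiMeasurePreserving (fun z : ℝ × X => z.1 - φ z.2) (volume.prod ρ)
      volume :=
    (quasiMeasurePreserving_sub_of_right_invariant volume (ρ.map φ)).comp hmap
  have hmeas : AEStronglyMeasurable (fun z : ℝ × X => k (z.1 - φ z.2) * U z.2)
      (volume.prod ρ) :=
    (hk.aestronglyMeasurable.comp_quasiMeasurePreserving hsub).mul
      (hU.aestronglyMeasurable.comp_quasiMeasurePreserving Measure.quasiMeasurePreserving_snd)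
  refine (integrable_prod_iff' hmeas).2
    ⟨Eventually.of_forall fun x => (hk.comp_sub_right (φ x)).mul_const (U x), ?_⟩
  simp_rw [norm_mul, integral_mul_const, integral_sub_right_eq_self fun t => ‖k t‖]
  exact hU.norm.const_mul _

theorem integral_integral_comp_sub_mul {ρ : Measure X} [SFinite ρ] {k : ℝ → ℝ} {φ U : X → ℝ}
    (hk : Integrable k) (hφ : Measurable φ) (hU : Integrable U ρ) :
    ∫ t, ∫ x, k (t - φ x) * U x ∂ρ = (∫ t, k t) * ∫ x, U x ∂ρ := by
  rw [integral_integral_swap (integrable_comp_sub_mul hk hφ hU)]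
  simp_rw [integral_mul_const, integral_sub_right_eq_self k, integral_const_mul]

theorem ae_eq_zero_of_ae_intervalIntegral_eq_zero {a b : ℝ} {r : ℝ → ℝ}
    (hr : IntegrableOn r (Ioc a b))
    (h : ∀ᵐ t ∂volume.restrict (Ioc a b), ∫ τ in a..t, r τ = 0) :
    r =ᵐ[volume.restrict (Ioc a b)] 0 := by
  let R : ℝ → ℝ := indicator (Ioc a b) r
  have hR : Integrable R := hr.integrable_indicator measurableSet_Ioc
  have hprim : EqOn (fun t => ∫ τ in a..t, R τ) 0 (Ioo a b) := by
    refine Measure.eqOn_open_of_ae_eq (μ := volume) ?_ isOpen_Ioo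
      (intervalIntegral.continuous_primitive (fun _ _ => hR.intervalIntegrable) a).continuousOn
      continuousOn_const
    filter_upwards [ae_restrict_of_ae_restrict_of_subset Ioo_subset_Ioc_self h,
      ae_restrict_mem measurableSet_Ioo] with t ht htab
    rw [intervalIntegral.integral_of_le htab.1.le] at ht ⊢
    rw [setIntegral_indicator measurableSet_Ioc,
      inter_eq_left.2 (Ioc_subset_Ioc_right htab.2.le), ht, Pi.zero_apply]
  rw [← restrict_Ioo_eq_restrict_Ioc]
  filter_upwards [ae_restrict_of_ae (LocallyIntegrable.ae_hasDerivAt_integral hR.locallyIntegrable),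
    ae_restrict_mem measurableSet_Ioo] with t ht htab
  have hderiv : HasDerivAt (fun t => ∫ τ in a..t, R τ) 0 t :=
    (hasDerivAt_const t (0 : ℝ)).congr_of_eventuallyEq
      (hprim.eventuallyEq_of_mem (isOpen_Ioo.mem_nhds htab))
  rw [Pi.zero_apply, ← (ht a).unique hderiv]
  exact (indicator_of_mem (Ioo_subset_Ioc_self htab) r).symm

end MeasureTheory

/-- The convolution kernel `t₊ ^ (α - 1) / Γ(α)` of the Riemann–Liouville integral of order `α`,
extended by zero to `(-∞, 0]` so that convolving with it only looks at the past. -/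
noncomputable def rlKernel (α : ℝ) : ℝ → ℝ :=
  indicator (Ioi 0) fun x => x ^ (α - 1) / Real.Gamma α

section Kernel

variable {α β x : ℝ}

theorem rlKernel_of_pos (hx : 0 < x) : rlKernel α x = x ^ (α - 1) / Real.Gamma α :=
  indicator_of_mem (mem_Ioi.2 hx) _

theorem rlKernel_of_nonpos (hx : x ≤ 0) : rlKernel α x = 0 :=
  indicator_of_notMem (notMem_Ioi.2 hx) _

theorem rlKernel_nonneg (hα : 0 < α) (x : ℝ) : 0 ≤ rlKernel α x :=
  indicator_nonneg (fun _ hy =>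
    div_nonneg (Real.rpow_nonneg (le_of_lt hy) _) (Real.Gamma_pos_of_pos hα).le) x

theorem measurable_rlKernel (α : ℝ) : Measurable (rlKernel α) :=
  Measurable.indicator (by fun_prop) measurableSet_Ioi

theorem integral_exp_neg_mul_rlKernel (hα : 0 < α) {r : ℝ} (hr : 0 < r) :
    ∫ x, Real.exp (-(r * x)) * rlKernel α x = r ^ (-α) := by
  have hΓ := (Real.Gamma_pos_of_pos hα).ne'
  calc ∫ x, Real.exp (-(r * x)) * rlKernel α x
      = ∫ x in Ioi 0, x ^ (α - 1) * Real.exp (-(r * x)) / Real.Gamma α := by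
        rw [← integral_indicator measurableSet_Ioi]
        congr 1 with x
        by_cases hx : x ∈ Ioi (0 : ℝ)
        · rw [indicator_of_mem hx, rlKernel_of_pos hx]
          ring
        · rw [indicator_of_notMem hx, rlKernel_of_nonpos (notMem_Ioi.1 hx), mul_zero]
    _ = r ^ (-α) := by
        rw [integral_div, Real.integral_rpow_mul_exp_neg_mul_Ioi hα hr, mul_div_cancel_right₀ _ hΓ,
          one_div, Real.inv_rpow hr.le, Real.rpow_neg hr.le]

theorem integrable_exp_neg_mul_rlKernel (hα : 0 < α) {r : ℝ} (hr : 0 < r) :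
    Integrable fun x => Real.exp (-(r * x)) * rlKernel α x := by
  refine Integrable.of_integral_ne_zero ?_
  rw [integral_exp_neg_mul_rlKernel hα hr]
  exact (Real.rpow_pos_of_pos hr _).ne'

theorem integrableOn_rlKernel_Iic (hα : 0 < α) (L : ℝ) : IntegrableOn (rlKernel α) (Iic L) := by
  refine ((integrable_exp_neg_mul_rlKernel hα one_pos).const_mul (Real.exp L)).integrableOn.mono'
    (measurable_rlKernel α).aestronglyMeasurable ?_
  filter_upwards [ae_restrict_mem measurableSet_Iic] with x hx
  rw [Real.norm_of_nonneg (rlKernel_nonneg hα x), ← mul_assoc, ← Real.exp_add]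
  exact le_mul_of_one_le_left (rlKernel_nonneg hα x)
    (Real.one_le_exp (by linarith [mem_Iic.1 hx]))

theorem integral_rpow_mul_rpow_sub (hα : 0 < α) (hβ : 0 < β) {t : ℝ} (ht : 0 < t) :
    ∫ τ in (0 : ℝ)..t, τ ^ (α - 1) * (t - τ) ^ (β - 1)
      = t ^ (α + β - 1) * (Real.Gamma α * Real.Gamma β / Real.Gamma (α + β)) := by
  have hcast : ((∫ τ in (0 : ℝ)..t, τ ^ (α - 1) * (t - τ) ^ (β - 1) : ℝ) : ℂ)
      = ∫ x in (0 : ℝ)..t, (x : ℂ) ^ ((α : ℂ) - 1) * ((t : ℂ) - x) ^ ((β : ℂ) - 1) := by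
    rw [← intervalIntegral.integral_ofReal]
    refine intervalIntegral.integral_congr fun x hx => ?_
    rw [uIcc_of_le ht.le] at hx
    simp only [Complex.ofReal_mul, Complex.ofReal_cpow hx.1,
      Complex.ofReal_cpow (sub_nonneg.2 hx.2), Complex.ofReal_sub, Complex.ofReal_one]
  have hcpow : (t : ℂ) ^ ((α : ℂ) + β - 1) = ((t ^ (α + β - 1) : ℝ) : ℂ) := by
    rw [Complex.ofReal_cpow ht.le]
    push_cast
    rfl
  rw [Complex.betaIntegral_scaled _ _ ht,
    Complex.betaIntegral_eq_Gamma_mul_div _ _ (by simpa) (by simpa), ← Complex.ofReal_add,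
    Complex.Gamma_ofReal, Complex.Gamma_ofReal, Complex.Gamma_ofReal, Complex.ofReal_add,
    hcpow] at hcast
  exact_mod_cast hcast

theorem integral_rlKernel_sub_mul_rlKernel (hα : 0 < α) (hβ : 0 < β) (t : ℝ) :
    ∫ x, rlKernel β (t - x) * rlKernel α x = rlKernel (α + β) t := by
  rcases le_or_gt t 0 with ht | ht
  · rw [rlKernel_of_nonpos ht]
    refine integral_eq_zero_of_ae (Eventually.of_forall fun x => ?_)
    rcases le_or_gt x 0 with hx | hx
    · simp only [rlKernel_of_nonpos hx, mul_zero, Pi.zero_apply]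
    · simp only [rlKernel_of_nonpos (show t - x ≤ 0 by linarith), zero_mul, Pi.zero_apply]
  · have hsupp : (fun x => rlKernel β (t - x) * rlKernel α x) = indicator (Ioo 0 t)
        fun x => x ^ (α - 1) * (t - x) ^ (β - 1) / (Real.Gamma α * Real.Gamma β) := by
      ext x
      by_cases hx : x ∈ Ioo 0 t
      · rw [indicator_of_mem hx, rlKernel_of_pos (sub_pos.2 hx.2), rlKernel_of_pos hx.1]
        ring
      · rw [indicator_of_notMem hx]
        rcases le_or_gt x 0 with hx0 | hx0
        · rw [rlKernel_of_nonpos hx0, mul_zero]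
        · rw [rlKernel_of_nonpos (sub_nonpos.2 (not_lt.1 fun hxt => hx ⟨hx0, hxt⟩)), zero_mul]
    have hΓα := (Real.Gamma_pos_of_pos hα).ne'
    have hΓβ := (Real.Gamma_pos_of_pos hβ).ne'
    rw [hsupp, integral_indicator measurableSet_Ioo, ← integral_Ioc_eq_integral_Ioo,
      ← intervalIntegral.integral_of_le ht.le, intervalIntegral.integral_div,
      integral_rpow_mul_rpow_sub hα hβ ht, rlKernel_of_pos ht]
    field_simp

end Kernel

section RiemannLiouville

variable {a b α β t : ℝ} {q q' : ℝ → ℝ}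

theorem integrable_rlKernel_comp_sub_mul {X : Type*} [MeasurableSpace X] {ρ : Measure X}
    [SFinite ρ] {φ U : X → ℝ} (hα : 0 < α) (hφ : Measurable φ) (haφ : ∀ᵐ x ∂ρ, a ≤ φ x)
    (hU : Integrable U ρ) :
    Integrable (fun z : ℝ × X => rlKernel α (z.1 - φ z.2) * U z.2)
      ((volume.restrict (Ioc a b)).prod ρ) := by
  have htrunc := integrable_comp_sub_mul
    ((integrableOn_rlKernel_Iic hα (b - a)).integrable_indicator measurableSet_Iic) hφ hU
  refine (htrunc.mono_measure (Measure.prod_mono Measure.restrict_le_self le_rfl)).congr ?_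
  filter_upwards [Measure.quasiMeasurePreserving_fst.ae (ae_restrict_mem measurableSet_Ioc),
    Measure.quasiMeasurePreserving_snd.ae haφ] with z ht hx
  rw [indicator_of_mem (mem_Iic.2 (sub_le_sub ht.2 hx))]

theorem rlInt_zero : rlInt a 0 q = q :=
  funext fun _ => if_pos rfl

theorem rlInt_one : rlInt a 1 q t = ∫ τ in a..t, q τ := by
  simp [rlInt]

theorem rlInt_eq_integral_rlKernel (hα : 0 < α) (ht : t ∈ Icc a b) :
    rlInt a α q t = ∫ τ in Ioc a b, rlKernel α (t - τ) * q τ := by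
  have hfuture : ∀ τ ∈ Ioc a b \ Ioo a t, rlKernel α (t - τ) * q τ = 0 := fun τ hτ => by
    rw [rlKernel_of_nonpos (sub_nonpos.2 (not_lt.1 fun h => hτ.2 ⟨hτ.1.1, h⟩)), zero_mul]
  rw [rlInt, if_neg hα.ne', intervalIntegral.integral_of_le ht.1, integral_Ioc_eq_integral_Ioo,
    ← integral_const_mul, setIntegral_eq_of_subset_of_forall_sdiff_eq_zero measurableSet_Ioc
      (Ioo_subset_Ioc_self.trans (Ioc_subset_Ioc_right ht.2)) hfuture]
  refine setIntegral_congr_fun measurableSet_Ioo fun τ hτ => ?_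
  simp only [rlKernel_of_pos (sub_pos.2 hτ.2)]
  ring

theorem rlInt_ae_eq_integral_rlKernel (hα : 0 < α) :
    rlInt a α q =ᵐ[volume.restrict (Ioc a b)]
      fun t => ∫ τ in Ioc a b, rlKernel α (t - τ) * q τ := by
  filter_upwards [ae_restrict_mem measurableSet_Ioc] with t ht
  exact rlInt_eq_integral_rlKernel hα (Ioc_subset_Icc_self ht)

theorem rlInt_rlKernel (hα : 0 < α) (hβ : 0 ≤ β) {s : ℝ} (has : a ≤ s) (hat : a ≤ t) :
    rlInt a β (fun τ => rlKernel α (τ - s)) t = rlKernel (α + β) (t - s) := by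
  rcases hβ.eq_or_lt with rfl | hβ
  · rw [rlInt_zero, add_zero]
  · have hsupp : ∀ τ, τ ∉ Ioc a t → rlKernel β (t - τ) * rlKernel α (τ - s) = 0 := fun τ hτ => by
      rcases le_or_gt τ a with h | h
      · rw [rlKernel_of_nonpos (x := τ - s) (by linarith), mul_zero]
      · rw [rlKernel_of_nonpos (sub_nonpos.2 (not_le.1 fun hτt => hτ ⟨h, hτt⟩).le), zero_mul]
    rw [rlInt_eq_integral_rlKernel hβ ⟨hat, le_rfl⟩,
      setIntegral_eq_integral_of_forall_compl_eq_zero hsupp,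
      ← integral_rlKernel_sub_mul_rlKernel hα hβ,
      ← integral_sub_right_eq_self (fun x => rlKernel β (t - s - x) * rlKernel α x) s]
    simp only [sub_sub_sub_cancel_right]

theorem rlKernel_mul_add_rlInt_of_lt (hα : 0 < α) (hat : a < t) (c : ℝ) :
    rlKernel α (t - a) * c + rlInt a α q t = (t - a) ^ (α - 1) / Real.Gamma α * c
      + 1 / Real.Gamma α * ∫ τ in a..t, (t - τ) ^ (α - 1) * q τ := by
  rw [rlKernel_of_pos (sub_pos.2 hat), rlInt, if_neg hα.ne']

theorem rlInt_mul_const (c : ℝ) : rlInt a α (fun τ => q τ * c) t = rlInt a α q t * c := by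
  unfold rlInt
  split_ifs
  · rfl
  · simp only [← mul_assoc, intervalIntegral.integral_mul_const]

theorem rlInt_congr_ae (hα : 0 ≤ α) (h : q =ᵐ[volume.restrict (Ioc a b)] q') :
    rlInt a α q =ᵐ[volume.restrict (Ioc a b)] rlInt a α q' := by
  rcases hα.eq_or_lt with rfl | hα
  · rwa [rlInt_zero, rlInt_zero]
  · filter_upwards [rlInt_ae_eq_integral_rlKernel hα, rlInt_ae_eq_integral_rlKernel hα]
      with t ht ht'
    rw [ht, ht']
    exact integral_congr_ae (h.mono fun τ hτ => by simp only [hτ])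

theorem ae_integrableOn_rlKernel_mul (hα : 0 < α) (hq : IntegrableOn q (Ioc a b)) :
    ∀ᵐ t ∂volume.restrict (Ioc a b), IntegrableOn (fun τ => rlKernel α (t - τ) * q τ) (Ioc a b) :=
  (integrable_rlKernel_comp_sub_mul hα measurable_id
    ((ae_restrict_mem measurableSet_Ioc).mono fun _ hτ => hτ.1.le) hq).prod_right_ae

theorem integrableOn_rlInt (hα : 0 ≤ α) (hq : IntegrableOn q (Ioc a b)) :
    IntegrableOn (rlInt a α q) (Ioc a b) := by
  rcases hα.eq_or_lt with rfl | hα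
  · rwa [rlInt_zero]
  · exact (integrable_rlKernel_comp_sub_mul hα measurable_id
      ((ae_restrict_mem measurableSet_Ioc).mono fun _ hτ => hτ.1.le) hq).integral_prod_left.congr
      (rlInt_ae_eq_integral_rlKernel hα).symm

theorem rlInt_sum_mul_const {κ : Type*} [Fintype κ] {v : κ → ℝ → ℝ} (hα : 0 ≤ α) (c : κ → ℝ)
    (hv : ∀ k, IntegrableOn (v k) (Ioc a b)) :
    ∀ᵐ t ∂volume.restrict (Ioc a b),
      rlInt a α (fun τ => ∑ k, v k τ * c k) t = ∑ k, rlInt a α (v k) t * c k := by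
  rcases hα.eq_or_lt with rfl | hα
  · simp only [rlInt_zero, eventually_true]
  · filter_upwards [ae_restrict_mem measurableSet_Ioc,
      ae_all_iff.2 fun k => ae_integrableOn_rlKernel_mul hα (hv k)] with t ht hint
    simp only [rlInt_eq_integral_rlKernel hα (Ioc_subset_Icc_self ht), Finset.mul_sum,
      ← mul_assoc]
    rw [integral_finsetSum _ fun k _ => (hint k).mul_const (c k)]
    simp only [integral_mul_const]

theorem rlInt_add (hα : 0 ≤ α) (hq : IntegrableOn q (Ioc a b)) (hq' : IntegrableOn q' (Ioc a b)) :
    ∀ᵐ t ∂volume.restrict (Ioc a b),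
      rlInt a α (fun τ => q τ + q' τ) t = rlInt a α q t + rlInt a α q' t := by
  simpa [Fin.sum_univ_two] using
    rlInt_sum_mul_const (v := ![q, q']) hα 1 (Fin.forall_fin_two.2 ⟨hq, hq'⟩)

theorem rlInt_sub (hα : 0 ≤ α) (hq : IntegrableOn q (Ioc a b)) (hq' : IntegrableOn q' (Ioc a b)) :
    ∀ᵐ t ∂volume.restrict (Ioc a b),
      rlInt a α (fun τ => q τ - q' τ) t = rlInt a α q t - rlInt a α q' t := by
  simpa [Fin.sum_univ_two, sub_eq_add_neg] using
    rlInt_sum_mul_const (v := ![q, q']) hα ![1, -1] (Fin.forall_fin_two.2 ⟨hq, hq'⟩)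

section Parameter

variable {S : Type*} [MeasurableSpace S] {ν : Measure S} [SFinite ν] {U : ℝ → S → ℝ}

theorem integrable_prod_rlInt (hα : 0 ≤ α)
    (hU : Integrable (Function.uncurry U) ((volume.restrict (Ioc a b)).prod ν)) :
    Integrable (fun z : ℝ × S => rlInt a α (fun τ => U τ z.2) z.1)
      ((volume.restrict (Ioc a b)).prod ν) := by
  rcases hα.eq_or_lt with rfl | hα
  · simp only [rlInt_zero]
    exact hU
  · have hkernel := (measurePreserving_prodAssoc _ _ _).integrable_comp_of_integrable
      (integrable_rlKernel_comp_sub_mul (b := b) hα measurable_snd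
        (Measure.quasiMeasurePreserving_snd.ae
          ((ae_restrict_mem measurableSet_Ioc).mono fun _ hτ => hτ.1.le)) hU.swap)
    refine hkernel.integral_prod_left.congr ?_
    filter_upwards [Measure.quasiMeasurePreserving_fst.ae (ae_restrict_mem measurableSet_Ioc)]
      with z hz
    exact (rlInt_eq_integral_rlKernel hα (Ioc_subset_Icc_self hz)).symm

theorem rlInt_integral (hα : 0 ≤ α)
    (hU : Integrable (Function.uncurry U) ((volume.restrict (Ioc a b)).prod ν)) :
    ∀ᵐ t ∂volume.restrict (Ioc a b),
      rlInt a α (fun τ => ∫ s, U τ s ∂ν) t = ∫ s, rlInt a α (fun τ => U τ s) t ∂ν := by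
  rcases hα.eq_or_lt with rfl | hα
  · simp only [rlInt_zero, eventually_true]
  · filter_upwards [ae_restrict_mem measurableSet_Ioc,
      (integrable_rlKernel_comp_sub_mul (b := b) hα measurable_fst
        (Measure.quasiMeasurePreserving_fst.ae
          ((ae_restrict_mem measurableSet_Ioc).mono fun _ hτ => hτ.1.le)) hU).prod_right_ae]
      with t ht hint
    simp only [rlInt_eq_integral_rlKernel hα (Ioc_subset_Icc_self ht), ← integral_const_mul]
    exact integral_integral_swap hint

end Parameter

theorem rlInt_rlInt (hα : 0 ≤ α) (hβ : 0 ≤ β) (hq : IntegrableOn q (Ioc a b)) :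
    rlInt a β (rlInt a α q) =ᵐ[volume.restrict (Ioc a b)] rlInt a (α + β) q := by
  rcases hα.eq_or_lt with rfl | hα
  · rw [rlInt_zero, zero_add]
  · have hU : Integrable (Function.uncurry fun τ s => rlKernel α (τ - s) * q s)
        ((volume.restrict (Ioc a b)).prod (volume.restrict (Ioc a b))) :=
      integrable_rlKernel_comp_sub_mul hα measurable_id
        ((ae_restrict_mem measurableSet_Ioc).mono fun _ hτ => hτ.1.le) hq
    filter_upwards [ae_restrict_mem measurableSet_Ioc, rlInt_integral hβ hU,
      rlInt_congr_ae hβ (rlInt_ae_eq_integral_rlKernel hα)] with t ht hfubini hconv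
    rw [hconv, hfubini,
      rlInt_eq_integral_rlKernel (add_pos_of_pos_of_nonneg hα hβ) (Ioc_subset_Icc_self ht)]
    refine setIntegral_congr_fun measurableSet_Ioc fun s hs => ?_
    simp only [rlInt_mul_const, rlInt_rlKernel hα hβ hs.1.le ht.1.le]

theorem ae_eq_zero_of_rlInt_ae_eq_zero (hβ : 0 ≤ β) (hβ1 : β ≤ 1) (hq : IntegrableOn q (Ioc a b))
    (h : rlInt a β q =ᵐ[volume.restrict (Ioc a b)] 0) : q =ᵐ[volume.restrict (Ioc a b)] 0 := by
  refine ae_eq_zero_of_ae_intervalIntegral_eq_zero hq ?_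
  filter_upwards [rlInt_rlInt hβ (sub_nonneg.2 hβ1) hq, rlInt_congr_ae (sub_nonneg.2 hβ1) h]
    with t hsemigroup hzero
  rw [← rlInt_one, ← add_sub_cancel β 1, ← hsemigroup, hzero]
  simp [rlInt]

end RiemannLiouville

section CauchyProblem

variable {a b α c : ℝ} {q h : ℝ → ℝ}

theorem integrableOn_rlKernel_sub (hα : 0 < α) (s : ℝ) :
    IntegrableOn (fun t => rlKernel α (t - s)) (Ioc a b) := by
  have htrunc := ((integrableOn_rlKernel_Iic hα (b - s)).integrable_indicator
    measurableSet_Iic).comp_sub_right s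
  refine htrunc.integrableOn.congr ?_
  filter_upwards [ae_restrict_mem measurableSet_Ioc] with t ht
  rw [indicator_of_mem (mem_Iic.2 (sub_le_sub_right ht.2 s))]

theorem rlInt_one_sub_rlKernel_mul_add_rlInt (hα : 0 < α) (hα1 : α ≤ 1)
    (hh : IntegrableOn h (Ioc a b)) :
    rlInt a (1 - α) (fun t => rlKernel α (t - a) * c + rlInt a α h t)
      =ᵐ[volume.restrict (Ioc a b)] fun t => c + ∫ τ in a..t, h τ := by
  have hα1' := sub_nonneg.2 hα1
  filter_upwards [ae_restrict_mem measurableSet_Ioc, rlInt_rlInt hα.le hα1' hh,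
    rlInt_add hα1' ((integrableOn_rlKernel_sub hα a).mul_const c) (integrableOn_rlInt hα.le hh)]
    with t ht hsemigroup hadd
  rw [hadd, hsemigroup, rlInt_mul_const, rlInt_rlKernel hα hα1' le_rfl ht.1.le, add_sub_cancel,
    rlInt_one, rlKernel_of_pos (sub_pos.2 ht.1), sub_self, Real.rpow_zero, Real.Gamma_one, div_one,
    one_mul]

theorem rlInt_one_sub_ae_eq_iff (hα : 0 < α) (hα1 : α ≤ 1) (hq : IntegrableOn q (Ioc a b))
    (hh : IntegrableOn h (Ioc a b)) :
    (rlInt a (1 - α) q =ᵐ[volume.restrict (Ioc a b)] fun t => c + ∫ τ in a..t, h τ) ↔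
      q =ᵐ[volume.restrict (Ioc a b)] fun t => rlKernel α (t - a) * c + rlInt a α h t := by
  have hα1' := sub_nonneg.2 hα1
  have hu : IntegrableOn (fun t => rlKernel α (t - a) * c + rlInt a α h t) (Ioc a b) :=
    ((integrableOn_rlKernel_sub hα a).mul_const c).add (integrableOn_rlInt hα.le hh)
  have hu_eq := rlInt_one_sub_rlKernel_mul_add_rlInt (c := c) hα hα1 hh
  refine ⟨fun hq_eq => ?_, fun hq_eq => (rlInt_congr_ae hα1' hq_eq).trans hu_eq⟩
  have hdiff : rlInt a (1 - α) (fun t => q t - (rlKernel α (t - a) * c + rlInt a α h t))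
      =ᵐ[volume.restrict (Ioc a b)] 0 := by
    filter_upwards [rlInt_sub hα1' hq hu, hq_eq, hu_eq] with t hsub hqt hut
    rw [hsub, hqt, hut, sub_self, Pi.zero_apply]
  exact (ae_eq_zero_of_rlInt_ae_eq_zero hα1' (by linarith) (hq.sub hu) hdiff).mono
    fun _ => sub_eq_zero.1

end CauchyProblem

section Gronwall

variable {a b α r : ℝ} {g : ℝ → ℝ}

theorem integrableOn_exp_neg_mul_abs (hg : IntegrableOn g (Ioc a b)) :
    IntegrableOn (fun t => Real.exp (-(r * t)) * |g t|) (Ioc a b) := by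
  rw [← integrableOn_Icc_iff_integrableOn_Ioc] at hg ⊢
  exact IntegrableOn.continuousOn_mul (by fun_prop) hg.abs isCompact_Icc

theorem exp_neg_mul_abs_rlInt_le (hα : 0 < α) {t : ℝ} (ht : t ∈ Icc a b) :
    Real.exp (-(r * t)) * |rlInt a α g t| ≤ ∫ τ in Ioc a b,
      (Real.exp (-(r * (t - τ))) * rlKernel α (t - τ)) * (Real.exp (-(r * τ)) * |g τ|) := by
  rw [rlInt_eq_integral_rlKernel hα ht]
  calc Real.exp (-(r * t)) * |∫ τ in Ioc a b, rlKernel α (t - τ) * g τ|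
      ≤ Real.exp (-(r * t)) * ∫ τ in Ioc a b, |rlKernel α (t - τ) * g τ| := by
        gcongr
        exact abs_integral_le_integral_abs
    _ = ∫ τ in Ioc a b,
          (Real.exp (-(r * (t - τ))) * rlKernel α (t - τ)) * (Real.exp (-(r * τ)) * |g τ|) := by
        rw [← integral_const_mul]
        congr 1 with τ
        have hexp : Real.exp (-(r * t)) = Real.exp (-(r * (t - τ))) * Real.exp (-(r * τ)) := by
          rw [← Real.exp_add]
          ring_nf
        rw [abs_mul, abs_of_nonneg (rlKernel_nonneg hα _), hexp]
        ring

theorem integral_exp_neg_mul_abs_rlInt_le (hα : 0 < α) (hr : 0 < r)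
    (hg : IntegrableOn g (Ioc a b)) :
    ∫ t in Ioc a b, Real.exp (-(r * t)) * |rlInt a α g t|
      ≤ r ^ (-α) * ∫ t in Ioc a b, Real.exp (-(r * t)) * |g t| := by
  let K : ℝ → ℝ := fun x => Real.exp (-(r * x)) * rlKernel α x
  let G : ℝ → ℝ := fun τ => Real.exp (-(r * τ)) * |g τ|
  have hK : Integrable K := integrable_exp_neg_mul_rlKernel hα hr
  have hG : IntegrableOn G (Ioc a b) := integrableOn_exp_neg_mul_abs hg
  have hK_nonneg : ∀ x, 0 ≤ K x := fun x =>
    mul_nonneg (Real.exp_pos _).le (rlKernel_nonneg hα x)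
  have hG_nonneg : ∀ τ, 0 ≤ G τ := fun τ => mul_nonneg (Real.exp_pos _).le (abs_nonneg _)
  have hKG := (integrable_comp_sub_mul hK measurable_id hG).integral_prod_left
  calc ∫ t in Ioc a b, Real.exp (-(r * t)) * |rlInt a α g t|
      ≤ ∫ t in Ioc a b, ∫ τ in Ioc a b, K (t - τ) * G τ :=
        setIntegral_mono_on (integrableOn_exp_neg_mul_abs (integrableOn_rlInt hα.le hg))
          hKG.integrableOn measurableSet_Ioc
          fun t ht => exp_neg_mul_abs_rlInt_le hα (Ioc_subset_Icc_self ht)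
    _ ≤ ∫ t, ∫ τ in Ioc a b, K (t - τ) * G τ :=
        setIntegral_le_integral hKG (Eventually.of_forall fun t =>
          integral_nonneg fun τ => mul_nonneg (hK_nonneg _) (hG_nonneg τ))
    _ = r ^ (-α) * ∫ τ in Ioc a b, G τ := by
        rw [← integral_exp_neg_mul_rlKernel hα hr]
        exact integral_integral_comp_sub_mul hK measurable_id hG

variable {ι : Type*} [Fintype ι] {M : ℝ}

theorem integral_exp_neg_mul_abs_rlInt_le_sum {p : ι → ℝ → ℝ} (hα : 0 < α) (hr : 0 < r)
    (hg : IntegrableOn g (Ioc a b)) (hp : ∀ j, IntegrableOn (p j) (Ioc a b))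
    (hbound : ∀ᵐ t ∂volume.restrict (Ioc a b), |g t| ≤ M * ∑ j, |p j t|) :
    ∫ t in Ioc a b, Real.exp (-(r * t)) * |rlInt a α g t|
      ≤ r ^ (-α) * M * ∑ j, ∫ t in Ioc a b, Real.exp (-(r * t)) * |p j t| := by
  have hp_exp := fun j => integrableOn_exp_neg_mul_abs (r := r) (hp j)
  calc ∫ t in Ioc a b, Real.exp (-(r * t)) * |rlInt a α g t|
      ≤ r ^ (-α) * ∫ t in Ioc a b, Real.exp (-(r * t)) * |g t| :=
        integral_exp_neg_mul_abs_rlInt_le hα hr hg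
    _ ≤ r ^ (-α) * ∫ t in Ioc a b, M * ∑ j, Real.exp (-(r * t)) * |p j t| := by
        refine mul_le_mul_of_nonneg_left (integral_mono_ae (integrableOn_exp_neg_mul_abs hg)
          ((integrable_finsetSum _ fun j _ => hp_exp j).const_mul M) ?_)
          (Real.rpow_pos_of_pos hr _).le
        filter_upwards [hbound] with t ht
        rw [← Finset.mul_sum, mul_left_comm]
        gcongr
    _ = r ^ (-α) * M * ∑ j, ∫ t in Ioc a b, Real.exp (-(r * t)) * |p j t| := by
        rw [integral_const_mul, integral_finsetSum _ fun j _ => hp_exp j, mul_assoc]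

theorem ae_eq_zero_of_ae_eq_rlInt {α : ι → ℝ} {p h : ι → ℝ → ℝ}
    (hα : ∀ i, 0 < α i) (hp : ∀ i, IntegrableOn (p i) (Ioc a b))
    (hh : ∀ i, IntegrableOn (h i) (Ioc a b))
    (hbound : ∀ i, ∀ᵐ t ∂volume.restrict (Ioc a b), |h i t| ≤ M * ∑ j, |p j t|)
    (heq : ∀ i, p i =ᵐ[volume.restrict (Ioc a b)] rlInt a (α i) (h i)) (i : ι) :
    p i =ᵐ[volume.restrict (Ioc a b)] 0 := by
  obtain ⟨r, hr, hr_lt⟩ : ∃ r : ℝ, 0 < r ∧ ∑ i, r ^ (-α i) * M < 1 := by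
    have hlim : Tendsto (fun r : ℝ => ∑ i, r ^ (-α i) * M) atTop (𝓝 (∑ _i : ι, 0 * M)) :=
      tendsto_finsetSum _ fun i _ => (tendsto_rpow_neg_atTop (hα i)).mul_const M
    exact ((eventually_gt_atTop 0).and
      (hlim.eventually_lt_const (by simp only [zero_mul, Finset.sum_const_zero, one_pos]))).exists
  let W : ι → ℝ := fun i => ∫ t in Ioc a b, Real.exp (-(r * t)) * |p i t|
  have hW_nonneg : ∀ i, 0 ≤ W i := fun i =>
    integral_nonneg fun t => mul_nonneg (Real.exp_pos _).le (abs_nonneg _)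
  have hW_le : ∀ i, W i ≤ r ^ (-α i) * M * ∑ j, W j := fun i =>
    (integral_congr_ae ((heq i).mono fun t ht => by simp only [ht])).trans_le
      (integral_exp_neg_mul_abs_rlInt_le_sum (hα i) hr (hh i) hp (hbound i))
  have hsum_nonneg : 0 ≤ ∑ j, W j := Finset.sum_nonneg fun j _ => hW_nonneg j
  have hsum_le : ∑ j, W j ≤ (∑ i, r ^ (-α i) * M) * ∑ j, W j := by
    rw [Finset.sum_mul]
    exact Finset.sum_le_sum fun i _ => hW_le i
  have hsum : ∑ j, W j = 0 := by nlinarith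
  have hWi : W i = 0 :=
    (Finset.sum_eq_zero_iff_of_nonneg fun j _ => hW_nonneg j).1 hsum i (Finset.mem_univ i)
  filter_upwards [(integral_eq_zero_iff_of_nonneg
    (fun t => mul_nonneg (Real.exp_pos _).le (abs_nonneg _))
    (integrableOn_exp_neg_mul_abs (hp i))).1 hWi] with t ht
  exact abs_eq_zero.1 ((mul_eq_zero.1 ht).resolve_left (Real.exp_pos _).ne')

end Gronwall

theorem integrable_mulVec {X ι κ : Type*} [MeasurableSpace X] [Fintype κ] {μ : Measure X}
    {A : X → Matrix ι κ ℝ} {u : X → κ → ℝ} {M : ℝ}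
    (hA : ∀ i j, AEStronglyMeasurable (fun x => A x i j) μ)
    (hAM : ∀ᵐ x ∂μ, ∀ i j, |A x i j| ≤ M) (hu : ∀ j, Integrable (fun x => u x j) μ) (i : ι) :
    Integrable (fun x => (A x *ᵥ u x) i) μ :=
  integrable_finsetSum _ fun j _ => (hu j).bdd_mul (hA i j) (hAM.mono fun _ hx => hx i j)

theorem abs_mulVec_le {ι κ : Type*} [Fintype κ] {A : Matrix ι κ ℝ} {M : ℝ}
    (hA : ∀ i j, |A i j| ≤ M) (v : κ → ℝ) (i : ι) : |(A *ᵥ v) i| ≤ M * ∑ j, |v j| := by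
  rw [Finset.mul_sum]
  refine (Finset.abs_sum_le_sum_abs _ _).trans (Finset.sum_le_sum fun j _ => ?_)
  rw [abs_mul]
  exact mul_le_mul_of_nonneg_right (hA i j) (abs_nonneg _)

/-- `u` is an integrable solution on `(a, b]` of the linear Volterra system
`u_i = f_i + I^{α_i}_{a+}[(A u)_i]` with source `f`. -/
structure IsVolterraSolution {ι : Type*} [Fintype ι] (a b : ℝ) (α : ι → ℝ) (A : ℝ → Matrix ι ι ℝ)
    (f u : ℝ → ι → ℝ) : Prop where
  integrableOn (i : ι) : IntegrableOn (fun t => u t i) (Ioc a b)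
  ae_eq : ∀ᵐ t ∂volume.restrict (Ioc a b), ∀ i,
    u t i = f t i + rlInt a (α i) (fun τ => (A τ *ᵥ u τ) i) t

namespace IsVolterraSolution

variable {ι : Type*} [Fintype ι] {a b M : ℝ} {α : ι → ℝ} {A : ℝ → Matrix ι ι ℝ}
  {f g u v : ℝ → ι → ℝ}

theorem congr (h : IsVolterraSolution a b α A f u) (hα : ∀ i, 0 ≤ α i)
    (hfg : ∀ᵐ t ∂volume.restrict (Ioc a b), f t = g t)
    (huv : ∀ᵐ t ∂volume.restrict (Ioc a b), u t = v t) : IsVolterraSolution a b α A g v := by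
  refine ⟨fun i => (h.integrableOn i).congr (huv.mono fun t ht => congrFun ht i), ?_⟩
  have hrl := fun i => rlInt_congr_ae (hα i)
    (huv.mono fun τ hτ => show (A τ *ᵥ u τ) i = (A τ *ᵥ v τ) i by rw [hτ])
  filter_upwards [h.ae_eq, hfg, huv, ae_all_iff.2 hrl] with t ht hft hut hrlt i
  rw [← hut, ← hft, ← hrlt, ht]

theorem sum_mul_const {κ : Type*} [Fintype κ] {f u : κ → ℝ → ι → ℝ} (hα : ∀ i, 0 ≤ α i)
    (hA : ∀ i j, AEStronglyMeasurable (fun t => A t i j) (volume.restrict (Ioc a b)))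
    (hAM : ∀ᵐ t ∂volume.restrict (Ioc a b), ∀ i j, |A t i j| ≤ M)
    (h : ∀ k, IsVolterraSolution a b α A (f k) (u k)) (c : κ → ℝ) :
    IsVolterraSolution a b α A (fun t i => ∑ k, f k t i * c k) fun t i => ∑ k, u k t i * c k where
  integrableOn i := integrable_finsetSum _ fun k _ => ((h k).integrableOn i).mul_const (c k)
  ae_eq := by
    have hrl := fun i => rlInt_sum_mul_const (hα i) c
      fun k => integrable_mulVec hA hAM (h k).integrableOn i
    filter_upwards [ae_all_iff.2 fun k => (h k).ae_eq, ae_all_iff.2 hrl] with t ht hrlt i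
    have hmulVec : (fun τ => (A τ *ᵥ fun i => ∑ k, u k τ i * c k) i)
        = fun τ => ∑ k, (A τ *ᵥ u k τ) i * c k := by
      ext τ
      simp only [mulVec, dotProduct, Finset.mul_sum, Finset.sum_mul, mul_assoc]
      exact Finset.sum_comm
    rw [hmulVec, hrlt, ← Finset.sum_add_distrib]
    exact Finset.sum_congr rfl fun k _ => by rw [ht k i, add_mul]

theorem add (hα : ∀ i, 0 ≤ α i)
    (hA : ∀ i j, AEStronglyMeasurable (fun t => A t i j) (volume.restrict (Ioc a b)))
    (hAM : ∀ᵐ t ∂volume.restrict (Ioc a b), ∀ i j, |A t i j| ≤ M)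
    (hu : IsVolterraSolution a b α A f u) (hv : IsVolterraSolution a b α A g v) :
    IsVolterraSolution a b α A (fun t i => f t i + g t i) fun t i => u t i + v t i := by
  simpa [Fin.sum_univ_two] using
    sum_mul_const (f := ![f, g]) (u := ![u, v]) hα hA hAM (Fin.forall_fin_two.2 ⟨hu, hv⟩) 1

theorem sub (hα : ∀ i, 0 ≤ α i)
    (hA : ∀ i j, AEStronglyMeasurable (fun t => A t i j) (volume.restrict (Ioc a b)))
    (hAM : ∀ᵐ t ∂volume.restrict (Ioc a b), ∀ i j, |A t i j| ≤ M)
    (hu : IsVolterraSolution a b α A f u) (hv : IsVolterraSolution a b α A g v) :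
    IsVolterraSolution a b α A (fun t i => f t i - g t i) fun t i => u t i - v t i := by
  simpa [Fin.sum_univ_two, sub_eq_add_neg] using
    sum_mul_const (f := ![f, g]) (u := ![u, v]) hα hA hAM (Fin.forall_fin_two.2 ⟨hu, hv⟩) ![1, -1]

theorem ae_eq_of_same_source (hα : ∀ i, 0 < α i)
    (hA : ∀ i j, AEStronglyMeasurable (fun t => A t i j) (volume.restrict (Ioc a b)))
    (hAM : ∀ᵐ t ∂volume.restrict (Ioc a b), ∀ i j, |A t i j| ≤ M)
    (hu : IsVolterraSolution a b α A f u) (hv : IsVolterraSolution a b α A f v) :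
    ∀ᵐ t ∂volume.restrict (Ioc a b), u t = v t := by
  have hsub := sub (fun i => (hα i).le) hA hAM hu hv
  have hzero := ae_eq_zero_of_ae_eq_rlInt hα hsub.integrableOn
    (fun i => integrable_mulVec hA hAM hsub.integrableOn i)
    (fun i => hAM.mono fun t ht => abs_mulVec_le ht _ i)
    (fun i => hsub.ae_eq.mono fun t ht => by simpa using ht i)
  filter_upwards [ae_all_iff.2 hzero] with t ht
  exact funext fun i => sub_eq_zero.1 (ht i)

theorem integral {S : Type*} [MeasurableSpace S] {ν : Measure S} [SFinite ν]
    {F U : ℝ → S → ι → ℝ} (hα : ∀ i, 0 ≤ α i)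
    (hA : ∀ i j, AEStronglyMeasurable (fun t => A t i j) (volume.restrict (Ioc a b)))
    (hAM : ∀ᵐ t ∂volume.restrict (Ioc a b), ∀ i j, |A t i j| ≤ M)
    (hF : ∀ i, Integrable (fun z : ℝ × S => F z.1 z.2 i) ((volume.restrict (Ioc a b)).prod ν))
    (hU : ∀ i, Integrable (fun z : ℝ × S => U z.1 z.2 i) ((volume.restrict (Ioc a b)).prod ν))
    (h : ∀ᵐ s ∂ν, IsVolterraSolution a b α A (fun t => F t s) fun t => U t s) :
    IsVolterraSolution a b α A (fun t i => ∫ s, F t s i ∂ν) fun t i => ∫ s, U t s i ∂ν where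
  integrableOn i := (hU i).integral_prod_left
  ae_eq := by
    have hAU := integrable_mulVec (A := fun z : ℝ × S => A z.1) (u := fun z => U z.1 z.2)
      (fun i j => (hA i j).comp_quasiMeasurePreserving Measure.quasiMeasurePreserving_fst)
      (Measure.quasiMeasurePreserving_fst.ae hAM) hU
    have hrl := fun i => integrable_prod_rlInt (U := fun t s => (A t *ᵥ U t s) i) (hα i) (hAU i)
    have hprod : ∀ i, ∀ᵐ z ∂(volume.restrict (Ioc a b)).prod ν, U z.1 z.2 i
        = F z.1 z.2 i + rlInt a (α i) (fun τ => (A τ *ᵥ U τ z.2) i) z.1 := fun i =>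
      ae_prod_of_ae_ae_swap (nullMeasurableSet_eq_fun (hU i).aemeasurable
        ((hF i).add (hrl i)).aemeasurable) (h.mono fun s hs => hs.ae_eq.mono fun t ht => ht i)
    refine ae_all_iff.2 fun i => ?_
    have hmulVec : (fun t => ∫ s, (A t *ᵥ U t s) i ∂ν) =ᵐ[volume.restrict (Ioc a b)]
        fun t => (A t *ᵥ fun j => ∫ s, U t s j ∂ν) i := by
      filter_upwards [ae_all_iff.2 fun j => (hU j).prod_right_ae] with t ht
      simp only [mulVec, dotProduct]
      rw [integral_finsetSum _ fun j _ => (ht j).const_mul _]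
      simp only [integral_const_mul]
    filter_upwards [Measure.ae_ae_of_ae_prod (hprod i), (hF i).prod_right_ae,
      (hrl i).prod_right_ae, rlInt_congr_ae (hα i) hmulVec,
      rlInt_integral (U := fun t s => (A t *ᵥ U t s) i) (hα i) (hAU i)]
      with t ht hFt hrlt hcongr hfubini
    rw [← hcongr, hfubini, ← integral_add hFt hrlt]
    exact integral_congr_ae ht

end IsVolterraSolution

/-- `Z` is a propagator on `(a, b]` of the homogeneous system with matrix `A`: for each initial time
`s`, column `j` of `Z(·, s)` solves the Volterra system whose source is the `j`-th column of
`diag((t - s)₊ ^ (α_i - 1) / Γ(α_i))`, with a bound uniform in `s` on its singularity at `s`. In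
particular `Z(t, s)` vanishes for `t ≤ s`, and all columns use the same base point `a`. -/
structure IsPropagator {ι : Type*} [Fintype ι] [DecidableEq ι] (a b : ℝ) (α : ι → ℝ)
    (A : ℝ → Matrix ι ι ℝ) (Z : ℝ → ℝ → Matrix ι ι ℝ) : Prop where
  measurable (i j : ι) : Measurable fun z : ℝ × ℝ => Z z.1 z.2 i j
  exists_bound : ∃ Θ : ι → ℝ, ∀ s ∈ Ico a b, ∀ᵐ t ∂volume.restrict (Ioc a b), ∀ i j,
    |Z t s i j| ≤ Θ i * rlKernel (α i) (t - s)
  isVolterraSolution : ∀ s ∈ Ico a b, ∀ j, IsVolterraSolution a b α A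
    (fun t i => diagonal (fun i => rlKernel (α i) (t - s)) i j) fun t i => Z t s i j

namespace IsPropagator

variable {ι : Type*} [Fintype ι] [DecidableEq ι] {a b M : ℝ} {α : ι → ℝ} {A : ℝ → Matrix ι ι ℝ}
  {Z : ℝ → ℝ → Matrix ι ι ℝ}

theorem mulVec (hZ : IsPropagator a b α A Z) (hα : ∀ i, 0 ≤ α i)
    (hA : ∀ i j, AEStronglyMeasurable (fun t => A t i j) (volume.restrict (Ioc a b)))
    (hAM : ∀ᵐ t ∂volume.restrict (Ioc a b), ∀ i j, |A t i j| ≤ M) {s : ℝ} (hs : s ∈ Ico a b)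
    (c : ι → ℝ) :
    IsVolterraSolution a b α A (fun t i => rlKernel (α i) (t - s) * c i)
      fun t => Z t s *ᵥ c := by
  have hsum := IsVolterraSolution.sum_mul_const hα hA hAM (hZ.isVolterraSolution s hs) c
  refine hsum.congr hα (Eventually.of_forall fun t => funext fun i => ?_)
    (Eventually.of_forall fun _ => rfl)
  exact mulVec_diagonal (fun i => rlKernel (α i) (t - s)) c i

theorem integrable_prod_mulVec (hZ : IsPropagator a b α A Z) (hα : ∀ i, 0 < α i)
    {B : ℝ → ι → ℝ} (hB : ∀ j, IntegrableOn (fun s => B s j) (Ioc a b)) (i : ι) :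
    Integrable (fun z : ℝ × ℝ => (Z z.1 z.2 *ᵥ B z.2) i)
      ((volume.restrict (Ioc a b)).prod (volume.restrict (Ioc a b))) := by
  obtain ⟨Θ, hΘ⟩ := hZ.exists_bound
  have hbound : ∀ j, ∀ᵐ z ∂(volume.restrict (Ioc a b)).prod (volume.restrict (Ioc a b)),
      |Z z.1 z.2 i j| ≤ Θ i * rlKernel (α i) (z.1 - z.2) := fun j => by
    refine ae_prod_of_ae_ae_swap (measurableSet_le (hZ.measurable i j).abs
      (((measurable_rlKernel _).comp (measurable_fst.sub measurable_snd)).const_mul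
        (Θ i))).nullMeasurableSet ?_
    rw [← restrict_Ioo_eq_restrict_Ioc (a := a)]
    filter_upwards [ae_restrict_mem measurableSet_Ioo] with s hs
    rw [restrict_Ioo_eq_restrict_Ioc]
    exact (hΘ s (Ioo_subset_Ico_self hs)).mono fun t ht => ht i j
  refine integrable_finsetSum _ fun j _ => ?_
  refine ((integrable_rlKernel_comp_sub_mul (hα i) measurable_id
    ((ae_restrict_mem measurableSet_Ioc).mono fun _ hτ => hτ.1.le) (hB j)).const_mul (Θ i)).mono
    ((hZ.measurable i j).aestronglyMeasurable.mul
      ((hB j).aestronglyMeasurable.comp_quasiMeasurePreserving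
        Measure.quasiMeasurePreserving_snd)) ?_
  filter_upwards [hbound j] with z hz
  rw [id, ← mul_assoc, norm_mul, norm_mul]
  exact mul_le_mul_of_nonneg_right (hz.trans (le_abs_self _)) (norm_nonneg _)

theorem duhamel (hZ : IsPropagator a b α A Z) (hα : ∀ i, 0 < α i)
    (hA : ∀ i j, AEStronglyMeasurable (fun t => A t i j) (volume.restrict (Ioc a b)))
    (hAM : ∀ᵐ t ∂volume.restrict (Ioc a b), ∀ i j, |A t i j| ≤ M) (hab : a < b)
    {B : ℝ → ι → ℝ} (hB : ∀ j, IntegrableOn (fun s => B s j) (Ioc a b)) (qa : ι → ℝ) :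
    IsVolterraSolution a b α A
      (fun t i => rlKernel (α i) (t - a) * qa i + rlInt a (α i) (fun s => B s i) t)
      fun t i => (Z t a *ᵥ qa) i + ∫ s in Ioc a b, (Z t s *ᵥ B s) i := by
  have hα' : ∀ i, 0 ≤ α i := fun i => (hα i).le
  have hcolumns : ∀ᵐ s ∂volume.restrict (Ioc a b), IsVolterraSolution a b α A
      (fun t i => rlKernel (α i) (t - s) * B s i) fun t => Z t s *ᵥ B s := by
    rw [← restrict_Ioo_eq_restrict_Ioc (a := a)]
    filter_upwards [ae_restrict_mem measurableSet_Ioo] with s hs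
    exact hZ.mulVec hα' hA hAM (Ioo_subset_Ico_self hs) (B s)
  have hsuperposition := IsVolterraSolution.integral hα' hA hAM
    (fun i => integrable_rlKernel_comp_sub_mul (hα i) measurable_id
      ((ae_restrict_mem measurableSet_Ioc).mono fun _ hτ => hτ.1.le) (hB i))
    (hZ.integrable_prod_mulVec hα hB) hcolumns
  refine ((hZ.mulVec hα' hA hAM ⟨le_rfl, hab⟩ qa).add hα' hA hAM hsuperposition).congr hα' ?_
    (Eventually.of_forall fun _ => rfl)
  filter_upwards [ae_restrict_mem measurableSet_Ioc] with t ht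
  exact funext fun i => by rw [rlInt_eq_integral_rlKernel (hα i) (Ioc_subset_Icc_self ht)]

end IsPropagator

/-- The left state-transition integral equation for `Z` at the time pair `(t, s)`; the singular
integral runs from the initial time `s`, not from a fixed base point. -/
def StateTransitionEq {ι : Type*} [Fintype ι] [DecidableEq ι] (α : ι → ℝ) (A : ℝ → Matrix ι ι ℝ)
    (Z : ℝ → ℝ → Matrix ι ι ℝ) (t s : ℝ) : Prop :=
  ∀ i j, Z t s i j = (t - s) ^ (α i - 1) / Real.Gamma (α i) * (if i = j then (1 : ℝ) else 0)
    + (1 / Real.Gamma (α i)) * ∫ τ in s..t, (t - τ) ^ (α i - 1) * ∑ k, A τ i k * Z τ s k j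

/-- The restriction of a two-time matrix family to times `t` after the initial time `s`, extended by
zero: this turns integrals over `(a, t)` into integrals over a fixed interval `(a, b]`. -/
noncomputable def causalPart {ι : Type*} (Z : ℝ → ℝ → Matrix ι ι ℝ) (t s : ℝ) : Matrix ι ι ℝ :=
  if s < t then Z t s else 0

section CausalPart

variable {ι : Type*} {a b s t : ℝ} {Z : ℝ → ℝ → Matrix ι ι ℝ}

theorem causalPart_of_lt (h : s < t) : causalPart Z t s = Z t s :=
  if_pos h

theorem causalPart_of_le (h : t ≤ s) : causalPart Z t s = 0 :=
  if_neg h.not_gt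

theorem measurable_causalPart (hZ : ∀ i j, Measurable fun z : ℝ × ℝ => Z z.1 z.2 i j) (i j : ι) :
    Measurable fun z : ℝ × ℝ => causalPart Z z.1 z.2 i j := by
  simp only [causalPart, apply_ite (fun M : Matrix ι ι ℝ => M i j)]
  exact (hZ i j).ite (measurableSet_lt measurable_snd measurable_fst) measurable_const

theorem setIntegral_causalPart_mulVec [Fintype ι] (ht : t ∈ Ioc a b) (B : ℝ → ι → ℝ) (i : ι) :
    ∫ s in Ioc a b, (causalPart Z t s *ᵥ B s) i = ∫ s in a..t, (Z t s *ᵥ B s) i := by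
  have hfuture : ∀ s ∈ Ioc a b \ Ioo a t, (causalPart Z t s *ᵥ B s) i = 0 := fun s hs => by
    rw [causalPart_of_le (not_lt.1 fun h => hs.2 ⟨hs.1.1, h⟩), zero_mulVec, Pi.zero_apply]
  rw [intervalIntegral.integral_of_le ht.1.le, integral_Ioc_eq_integral_Ioo (y := t),
    setIntegral_eq_of_subset_of_forall_sdiff_eq_zero measurableSet_Ioc
      (Ioo_subset_Ioc_self.trans (Ioc_subset_Ioc_right ht.2)) hfuture]
  exact setIntegral_congr_fun measurableSet_Ioo fun s hs => by rw [causalPart_of_lt hs.2]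

theorem rlInt_eq_setIntegral_of_eq_zero {α : ℝ} {q : ℝ → ℝ} (hα : 0 < α) (has : a ≤ s)
    (hat : a ≤ t) (hq : ∀ τ ≤ s, q τ = 0) :
    rlInt a α q t = 1 / Real.Gamma α * ∫ τ in Ioc s t, (t - τ) ^ (α - 1) * q τ := by
  rw [rlInt, if_neg hα.ne', intervalIntegral.integral_of_le hat,
    setIntegral_eq_of_subset_of_forall_sdiff_eq_zero measurableSet_Ioc (Ioc_subset_Ioc_left has)]
  intro τ hτ
  rw [hq τ (not_lt.1 fun h => hτ.2 ⟨h, hτ.1.2⟩), mul_zero]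

variable [Fintype ι] [DecidableEq ι] {α : ι → ℝ} {A : ℝ → Matrix ι ι ℝ}

theorem causalPart_eq_of_stateTransition (hα : ∀ i, 0 < α i) (has : a ≤ s) (hat : a ≤ t)
    (hZ : s < t → StateTransitionEq α A Z t s)
    (i j : ι) :
    causalPart Z t s i j = diagonal (fun i => rlKernel (α i) (t - s)) i j
      + rlInt a (α i) (fun τ => (A τ *ᵥ fun k => causalPart Z τ s k j) i) t := by
  have hpast : ∀ τ ≤ s, (A τ *ᵥ fun k => causalPart Z τ s k j) i = 0 := fun τ hτ => by
    simp only [causalPart_of_le hτ, Matrix.mulVec, dotProduct, Matrix.zero_apply, mul_zero,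
      Finset.sum_const_zero]
  rw [rlInt_eq_setIntegral_of_eq_zero (hα i) has hat hpast, diagonal_apply]
  rcases le_or_gt t s with hts | hst
  · simp only [causalPart_of_le hts, rlKernel_of_nonpos (sub_nonpos.2 hts), Ioc_eq_empty_of_le hts,
      Matrix.zero_apply, ite_self, Measure.restrict_empty, integral_zero_measure, mul_zero,
      add_zero]
  · rw [causalPart_of_lt hst, hZ hst, intervalIntegral.integral_of_le hst.le,
      rlKernel_of_pos (sub_pos.2 hst), mul_ite, mul_one, mul_zero]
    congr 2
    refine setIntegral_congr_fun measurableSet_Ioc fun τ hτ => ?_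
    simp only [causalPart_of_lt hτ.1, Matrix.mulVec, dotProduct]

theorem isPropagator_causalPart (hα : ∀ i, 0 < α i)
    (hZmeas : ∀ i j, Measurable fun z : ℝ × ℝ => Z z.1 z.2 i j)
    (hZeq : ∀ s ∈ Ico a b, ∀ᵐ t ∂volume.restrict (Ioc a b),
      s < t → StateTransitionEq α A Z t s)
    {Θ : ℝ} (hZbdd : ∀ s ∈ Ico a b, ∀ᵐ t ∂volume.restrict (Ioc a b), s < t → ∀ i j,
      |Z t s i j| ≤ (t - s) ^ (α i - 1) * Θ) :
    IsPropagator a b α A (causalPart Z) := by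
  have hbound : ∀ s ∈ Ico a b, ∀ᵐ t ∂volume.restrict (Ioc a b), ∀ i j,
      |causalPart Z t s i j| ≤ Real.Gamma (α i) * Θ * rlKernel (α i) (t - s) := fun s hs => by
    filter_upwards [hZbdd s hs] with t ht i j
    rcases le_or_gt t s with hts | hst
    · rw [causalPart_of_le hts, rlKernel_of_nonpos (sub_nonpos.2 hts), Matrix.zero_apply, abs_zero,
        mul_zero]
    · have hΓ := (Real.Gamma_pos_of_pos (hα i)).ne'
      rw [causalPart_of_lt hst, rlKernel_of_pos (sub_pos.2 hst)]
      refine (ht hst i j).trans_eq ?_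
      field_simp
  refine ⟨measurable_causalPart hZmeas, ⟨_, hbound⟩, fun s hs j => ⟨fun i => ?_, ?_⟩⟩
  · exact ((integrableOn_rlKernel_sub (hα i) s).const_mul _).mono'
      ((measurable_causalPart hZmeas i j).comp measurable_prodMk_right).aestronglyMeasurable
      ((hbound s hs).mono fun t ht => ht i j)
  · filter_upwards [hZeq s hs, ae_restrict_mem measurableSet_Ioc] with t ht htab i
    exact causalPart_eq_of_stateTransition hα hs.1 htab.1.le ht i j

theorem isVolterraSolution_of_stateTransition {M Θ : ℝ} {B q : ℝ → ι → ℝ} {qa : ι → ℝ}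
    (hab : a < b) (hα : ∀ i, 0 < α i)
    (hA : ∀ i j, AEStronglyMeasurable (fun t => A t i j) (volume.restrict (Ioc a b)))
    (hAM : ∀ᵐ t ∂volume.restrict (Ioc a b), ∀ i j, |A t i j| ≤ M)
    (hB : ∀ i, IntegrableOn (fun t => B t i) (Ioc a b))
    (hZmeas : ∀ i j, Measurable fun z : ℝ × ℝ => Z z.1 z.2 i j)
    (hZeq : ∀ s ∈ Ico a b, ∀ᵐ t ∂volume.restrict (Ioc a b),
      s < t → StateTransitionEq α A Z t s)
    (hZbdd : ∀ s ∈ Ico a b, ∀ᵐ t ∂volume.restrict (Ioc a b), s < t → ∀ i j,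
      |Z t s i j| ≤ (t - s) ^ (α i - 1) * Θ)
    (hq : ∀ᵐ t ∂volume.restrict (Ioc a b), ∀ i,
      q t i = (Z t a *ᵥ qa) i + ∫ s in a..t, (Z t s *ᵥ B s) i) :
    IsVolterraSolution a b α A
      (fun t i => rlKernel (α i) (t - a) * qa i + rlInt a (α i) (fun τ => B τ i) t) q := by
  refine ((isPropagator_causalPart hα hZmeas hZeq hZbdd).duhamel hα hA hAM hab hB qa).congr
    (fun i => (hα i).le) (Eventually.of_forall fun _ => rfl) ?_
  filter_upwards [hq, ae_restrict_mem measurableSet_Ioc] with t ht htab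
  exact funext fun i => by
    rw [ht i, setIntegral_causalPart_mulVec htab, causalPart_of_lt htab.1]

end CausalPart

theorem isVolterraSolution_affine_iff {ι : Type*} [Fintype ι] {a b M : ℝ} {α : ι → ℝ}
    {A : ℝ → Matrix ι ι ℝ} {B q : ℝ → ι → ℝ} {qa : ι → ℝ} (hα : ∀ i, 0 ≤ α i)
    (hA : ∀ i j, AEStronglyMeasurable (fun t => A t i j) (volume.restrict (Ioc a b)))
    (hAM : ∀ᵐ t ∂volume.restrict (Ioc a b), ∀ i j, |A t i j| ≤ M)
    (hB : ∀ i, IntegrableOn (fun t => B t i) (Ioc a b))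
    (hq : ∀ i, IntegrableOn (fun t => q t i) (Ioc a b)) :
    IsVolterraSolution a b α A
        (fun t i => rlKernel (α i) (t - a) * qa i + rlInt a (α i) (fun τ => B τ i) t) q ↔
      ∀ᵐ t ∂volume.restrict (Ioc a b), ∀ i, q t i
        = rlKernel (α i) (t - a) * qa i + rlInt a (α i) (fun τ => (A τ *ᵥ q τ) i + B τ i) t := by
  have hadd := ae_all_iff.2 fun i => rlInt_add (hα i) (integrable_mulVec hA hAM hq i) (hB i)
  have hiff : ∀ᵐ t ∂volume.restrict (Ioc a b), ∀ i,
      rlKernel (α i) (t - a) * qa i + rlInt a (α i) (fun τ => (A τ *ᵥ q τ) i + B τ i) t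
        = rlKernel (α i) (t - a) * qa i + rlInt a (α i) (fun τ => B τ i) t
          + rlInt a (α i) (fun τ => (A τ *ᵥ q τ) i) t :=
    hadd.mono fun t ht i => by rw [ht i]; ring
  refine ⟨fun h => ?_, fun h => ⟨hq, ?_⟩⟩
  · filter_upwards [h.ae_eq, hiff] with t ht hiff_t i using (ht i).trans (hiff_t i).symm
  · filter_upwards [h, hiff] with t ht hiff_t i using (ht i).trans (hiff_t i)

section Global

variable {a : ℝ} {I : Set ℝ}

theorem ae_restrict_iff_forall_Ioc (haI : a ∈ I) (hIsub : I ⊆ Ici a) (hIord : I.OrdConnected)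
    {P : ℝ → Prop} : (∀ᵐ t ∂volume.restrict I, P t) ↔
      ∀ b ∈ I, a < b → ∀ᵐ t ∂volume.restrict (Ioc a b), P t := by
  refine ⟨fun h b hb _ => ae_restrict_of_ae_restrict_of_subset
    (Ioc_subset_Icc_self.trans (hIord.out haI hb)) h, fun h => ?_⟩
  refine ae_restrict_of_ae_restrict_inter_Ioo fun x y hx hy hxy => ?_
  refine ae_restrict_of_ae_restrict_of_subset (fun t ht => ?_) (h y hy ((hIsub hx).trans_lt hxy))
  exact ⟨(hIsub hx).trans_lt ht.2.1, ht.2.2.le⟩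

theorem locIntegrableOn_iff_forall_Ioc (hIsub : I ⊆ Ici a) {q : ℝ → ℝ} :
    LocIntegrableOn a I q ↔ ∀ b ∈ I, a < b → IntegrableOn q (Ioc a b) := by
  refine forall₂_congr fun b hb => ?_
  rw [integrableOn_Icc_iff_integrableOn_Ioc]
  rcases (mem_Ici.1 (hIsub hb)).eq_or_lt with rfl | hab
  · simp only [Ioc_self, integrableOn_empty, implies_true]
  · simp only [hab, true_imp_iff]

theorem locIntegrableOn_of_ae_abs_le {q : ℝ → ℝ} (hq : Measurable q)
    (hbdd : ∀ b ∈ I, ∃ M : ℝ, ∀ᵐ t ∂volume.restrict (Icc a b), |q t| ≤ M) :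
    LocIntegrableOn a I q := fun b hb => by
  obtain ⟨M, hM⟩ := hbdd b hb
  exact Measure.integrableOn_of_bounded measure_Icc_lt_top.ne hq.aestronglyMeasurable hM

theorem isRLSolution_iff_forall_Ioc (haI : a ∈ I) (hIsub : I ⊆ Ici a) (hIord : I.OrdConnected)
    {m : ℕ} {α qa : Fin m → ℝ} {F : (Fin m → ℝ) → ℝ → Fin m → ℝ} {q : ℝ → Fin m → ℝ}
    (hα : ∀ i, 0 < α i ∧ α i ≤ 1) :
    IsRLSolution a I α qa F q ↔ ∀ b ∈ I, a < b → ∀ i, IntegrableOn (fun t => q t i) (Ioc a b) ∧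
      IntegrableOn (fun t => F (q t) t i) (Ioc a b) ∧
      (fun t => q t i) =ᵐ[volume.restrict (Ioc a b)]
        fun t => rlKernel (α i) (t - a) * qa i + rlInt a (α i) (fun τ => F (q τ) τ i) t := by
  constructor
  · rintro ⟨hq, hF⟩ b hb hab i
    obtain ⟨h, hh, hcauchy, hhF⟩ := hF i
    have hqb := (locIntegrableOn_iff_forall_Ioc hIsub).1 (hq i) b hb hab
    have hhb := (locIntegrableOn_iff_forall_Ioc hIsub).1 hh b hb hab
    have hhFb := (ae_restrict_iff_forall_Ioc haI hIsub hIord).1 hhF b hb hab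
    have hvolterra := (rlInt_one_sub_ae_eq_iff (hα i).1 (hα i).2 hqb hhb).1
      ((ae_restrict_iff_forall_Ioc haI hIsub hIord).1 hcauchy b hb hab)
    refine ⟨hqb, hhb.congr hhFb, ?_⟩
    filter_upwards [hvolterra, rlInt_congr_ae (hα i).1.le hhFb] with t ht hcongr
    rw [ht, hcongr]
  · refine fun H => ⟨fun i => (locIntegrableOn_iff_forall_Ioc hIsub).2 fun b hb hab =>
      (H b hb hab i).1, fun i => ⟨fun t => F (q t) t i, ?_, ?_, Eventually.of_forall fun _ => rfl⟩⟩
    · exact (locIntegrableOn_iff_forall_Ioc hIsub).2 fun b hb hab => (H b hb hab i).2.1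
    · refine (ae_restrict_iff_forall_Ioc haI hIsub hIord).2 fun b hb hab => ?_
      obtain ⟨hqb, hFb, hvolterra⟩ := H b hb hab i
      exact (rlInt_one_sub_ae_eq_iff (hα i).1 (hα i).2 hqb hFb).2 hvolterra

theorem isRLSolution_affine_iff (haI : a ∈ I) (hIsub : I ⊆ Ici a) (hIord : I.OrdConnected)
    {m : ℕ} {α qa : Fin m → ℝ} {A : ℝ → Matrix (Fin m) (Fin m) ℝ} {B q : ℝ → Fin m → ℝ}
    (hα : ∀ i, 0 < α i ∧ α i ≤ 1) (hA : ∀ i j, Measurable fun t => A t i j)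
    (hAbdd : ∀ b ∈ I, ∃ M : ℝ, ∀ᵐ t ∂volume.restrict (Ioc a b), ∀ i j, |A t i j| ≤ M)
    (hB : ∀ i, LocIntegrableOn a I fun t => B t i) :
    IsRLSolution a I α qa (fun x t i => (A t *ᵥ x) i + B t i) q ↔
      ∀ b ∈ I, a < b → IsVolterraSolution a b α A
        (fun t i => rlKernel (α i) (t - a) * qa i + rlInt a (α i) (fun τ => B τ i) t) q := by
  rw [isRLSolution_iff_forall_Ioc haI hIsub hIord hα]
  refine forall₃_congr fun b hb hab => ?_
  obtain ⟨M, hM⟩ := hAbdd b hb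
  have hAb := fun i j => (hA i j).aestronglyMeasurable (μ := volume.restrict (Ioc a b))
  have hBb := fun i => (locIntegrableOn_iff_forall_Ioc hIsub).1 (hB i) b hb hab
  have haffine := fun hq => isVolterraSolution_affine_iff (q := q) (qa := qa)
    (fun i => (hα i).1.le) hAb hM hBb hq
  refine ⟨fun h => (haffine fun i => (h i).1).2 (ae_all_iff.2 fun i => (h i).2.2), fun h i => ?_⟩
  exact ⟨h.integrableOn i, (integrable_mulVec hAb hM h.integrableOn i).add (hBb i),
    ((haffine h.integrableOn).1 h).mono fun t ht => ht i⟩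

end Global

theorem statement11_general {a : ℝ} {I : Set ℝ} (haI : a ∈ I) (hIsub : I ⊆ Ici a)
    (hIord : I.OrdConnected) {m : ℕ} {α : Fin m → ℝ} (hα : ∀ i, 0 < α i ∧ α i ≤ 1)
    {qa : Fin m → ℝ} {A : ℝ → Matrix (Fin m) (Fin m) ℝ} {B : ℝ → Fin m → ℝ}
    (hA : ∀ i j, Measurable fun t => A t i j)
    (hAbdd : ∀ b ∈ I, ∃ M : ℝ, ∀ᵐ t ∂volume.restrict (Icc a b), ∀ i j, |A t i j| ≤ M)
    (hB : ∀ i, LocIntegrableOn a I fun t => B t i)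
    {Z : ℝ → ℝ → Matrix (Fin m) (Fin m) ℝ}
    (hZmeas : ∀ i j, Measurable fun z : ℝ × ℝ => Z z.1 z.2 i j)
    (hZeq : ∀ s ∈ I, ∀ᵐ t ∂volume.restrict I, s < t → StateTransitionEq α A Z t s)
    (hZbdd : ∀ b ∈ I, ∃ Θ : ℝ, ∀ s ∈ Ico a b, ∀ᵐ t ∂volume.restrict I, s < t → t ≤ b →
      ∀ i j, |Z t s i j| ≤ (t - s) ^ (α i - 1) * Θ)
    {q : ℝ → Fin m → ℝ}
    (hq : ∀ᵐ t ∂volume.restrict I, ∀ i,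
      q t i = (Z t a *ᵥ qa) i + ∫ s in a..t, (Z t s *ᵥ B s) i) :
    (∀ᵐ t ∂volume.restrict I, ∀ i,
      q t i = (t - a) ^ (α i - 1) / Real.Gamma (α i) * qa i
        + 1 / Real.Gamma (α i) * ∫ τ in a..t, (t - τ) ^ (α i - 1) * ((A τ *ᵥ q τ) i + B τ i)) ∧
    IsRLSolution a I α qa (fun x t i => (A t *ᵥ x) i + B t i) q ∧
    ∀ q' : ℝ → Fin m → ℝ, IsRLSolution a I α qa (fun x t i => (A t *ᵥ x) i + B t i) q' →
      ∀ᵐ t ∂volume.restrict I, q' t = q t := by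
  have hloc {P : ℝ → Prop} := ae_restrict_iff_forall_Ioc (P := P) haI hIsub hIord
  have hα0 : ∀ i, 0 < α i := fun i => (hα i).1
  have hAb b i j := (hA i j).aestronglyMeasurable (μ := volume.restrict (Ioc a b))
  have hAM : ∀ b ∈ I, ∃ M : ℝ, ∀ᵐ t ∂volume.restrict (Ioc a b), ∀ i j, |A t i j| ≤ M :=
    fun b hb => (hAbdd b hb).imp fun _ => ae_restrict_of_ae_restrict_of_subset Ioc_subset_Icc_self
  have hBb b hb hab i := (locIntegrableOn_iff_forall_Ioc hIsub).1 (hB i) b hb hab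
  have hcauchy {u : ℝ → Fin m → ℝ} :=
    isRLSolution_affine_iff (qa := qa) (q := u) haI hIsub hIord hα hA hAM hB
  have hvolterra : ∀ b ∈ I, a < b → IsVolterraSolution a b α A
      (fun t i => rlKernel (α i) (t - a) * qa i + rlInt a (α i) (fun τ => B τ i) t) q := by
    intro b hb hab
    obtain ⟨⟨M, hM⟩, Θ, hΘ⟩ := And.intro (hAM b hb) (hZbdd b hb)
    refine isVolterraSolution_of_stateTransition hab hα0 (hAb b) hM (hBb b hb hab) hZmeas
      (fun s hs => hloc.1 (hZeq s (hIord.out haI hb ⟨hs.1, hs.2.le⟩)) b hb hab)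
      (Θ := Θ) (fun s hs => ?_) (hloc.1 hq b hb hab)
    filter_upwards [hloc.1 (hΘ s hs) b hb hab, ae_restrict_mem measurableSet_Ioc]
      with t ht htab hst using ht hst htab.2
  have hsol := hcauchy.2 hvolterra
  refine ⟨hloc.2 fun b hb hab => ?_, hsol, fun q' hq' => hloc.2 fun b hb hab => ?_⟩
  · have hrepr i := ((isRLSolution_iff_forall_Ioc haI hIsub hIord hα).1 hsol b hb hab i).2.2
    filter_upwards [ae_all_iff.2 hrepr, ae_restrict_mem measurableSet_Ioc] with t ht htab i
    rw [ht i, rlKernel_mul_add_rlInt_of_lt (hα0 i) htab.1]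
  · obtain ⟨M, hM⟩ := hAM b hb
    exact (hcauchy.1 hq' b hb hab).ae_eq_of_same_source hα0 (hAb b) hM (hvolterra b hb hab)

theorem statement11 (a : ℝ) (I : Set ℝ)
    (haI : a ∈ I) (hIsub : I ⊆ Set.Ici a) (hIint : (interior I).Nonempty)
    (hIord : I.OrdConnected)
    (m : ℕ) (hm : 0 < m)
    (α : Fin m → ℝ) (hα : ∀ i, 0 < α i ∧ α i ≤ 1)
    (qa : Fin m → ℝ)
    (A : ℝ → Matrix (Fin m) (Fin m) ℝ) (B : ℝ → Fin m → ℝ)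
    -- `A` and `B` are measurable and locally essentially bounded on `I`
    (hAmeas : ∀ i j, Measurable fun t => A t i j)
    (hAbdd : ∀ b ∈ I, ∃ M : ℝ,
      ∀ᵐ t ∂(volume.restrict (Set.Icc a b)), ∀ i j, |A t i j| ≤ M)
    (hBmeas : ∀ i, Measurable fun t => B t i)
    (hBbdd : ∀ b ∈ I, ∃ M : ℝ,
      ∀ᵐ t ∂(volume.restrict (Set.Icc a b)), ∀ i, |B t i| ≤ M)
    (Z : ℝ → ℝ → Matrix (Fin m) (Fin m) ℝ)
    (hZmeas : ∀ i j, Measurable fun p : ℝ × ℝ => Z p.1 p.2 i j)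
    -- `Z` satisfies the left state-transition integral equation (row-constant multi-order)
    (hZeq : ∀ s ∈ I, ∀ᵐ t ∂(volume.restrict I), s < t → ∀ i j,
      Z t s i j = (t - s) ^ (α i - 1) / Real.Gamma (α i) * (if i = j then (1:ℝ) else 0)
        + (1 / Real.Gamma (α i)) *
            ∫ τ in s..t, (t - τ) ^ (α i - 1) * ∑ k, A τ i k * Z τ s k j)
    -- the bound `|Z_{ij}(t,s)| ≤ (t-s)^{α_i - 1} Θ^b` on each `[a,b] ⊆ I`
    (hZbdd : ∀ b ∈ I, ∃ Θ : ℝ, 0 ≤ Θ ∧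
      ∀ s ∈ Set.Ico a b, ∀ᵐ t ∂(volume.restrict I), s < t → t ≤ b → ∀ i j,
        |Z t s i j| ≤ (t - s) ^ (α i - 1) * Θ)
    (q : ℝ → Fin m → ℝ)
    -- `q` is given by the fractional Duhamel formula
    (hq : ∀ᵐ t ∂(volume.restrict I), ∀ i,
      q t i = (∑ j, Z t a i j * qa j) + ∫ s in a..t, ∑ j, Z t s i j * B s j) :
    (∀ᵐ t ∂(volume.restrict I), ∀ i,
      q t i = (t - a) ^ (α i - 1) / Real.Gamma (α i) * qa i
        + (1 / Real.Gamma (α i)) *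
            ∫ τ in a..t, (t - τ) ^ (α i - 1) * ((∑ j, A τ i j * q τ j) + B τ i)) ∧
    IsRLSolution a I α qa (fun x t i => (∑ j, A t i j * x j) + B t i) q ∧
    ∀ q' : ℝ → Fin m → ℝ,
      IsRLSolution a I α qa (fun x t i => (∑ j, A t i j * x j) + B t i) q' →
      ∀ᵐ t ∂(volume.restrict I), q' t = q t := by
  have hB : ∀ i, LocIntegrableOn a I fun t => B t i := fun i =>
    locIntegrableOn_of_ae_abs_le (hBmeas i) fun b hb =>
      (hBbdd b hb).imp fun _ hM => hM.mono fun _ ht => ht i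
  exact statement11_general haI hIsub hIord hα hAmeas hAbdd hB hZmeas hZeq
    (fun b hb => (hZbdd b hb).imp fun _ hΘ => hΘ.2) hq
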